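/- For i = 1, 2 let F^{(i)} ∈ ℂ^{N_i×N_i} be the DFT matrix of dimension N_i, and let F^{(i)}_{M_i} denote its first M_i rows, where K_i, M_i satisfy 2K_i ≤ M_i ≤ N_i. Let x_i, x_i′ ∈ ℂ^{N_i} each have at most K_i nonzero entries. If the Kronecker products of the sampled spectral representations coincide, (F^{(1)}_{M_1} x_1) ⊗ (F^{(2)}_{M_2} x_2) = (F^{(1)}_{M_1} x_1′) ⊗ (F^{(2)}_{M_2} x_2′), then x_1 ⊗ x_2 = x_1′ ⊗ x_2′; that is, a multi-dimensional K_1K_2-sparse graph signal x = x_1 ⊗ x_2 on a product of circulant graphs is perfectly determined by the tensor product y = y_1 ⊗ y_2 of the dimensionality-reduced GFT representations y_i = F^{(i)}_{M_i} x_i with M_i ≥ 2K_i. -/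

import Mathlib

open Finset in
/-- A vector annihilated by the first `M` rows of a Vandermonde system with distinct nodes
vanishes as soon as it has at most `M` nonzero entries. -/
theorem eq_zero_of_forall_lt_sum_mul_pow_eq_zero {ι R : Type*} [Fintype ι] [CommRing R]
    [IsDomain R] [DecidableEq R] {v : ι → R} (hv : Function.Injective v) {M : ℕ} {z : ι → R}
    (hz : #{i | z i ≠ 0} ≤ M) (h : ∀ m < M, ∑ i, z i * v i ^ m = 0) : z = 0 := by
  set S : Finset ι := {i | z i ≠ 0} with hS
  let e := S.equivFin.symm
  have hf : (fun j => z (e j)) = 0 := by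
    refine Matrix.eq_zero_of_forall_pow_sum_mul_pow_eq_zero (f := fun j => v (e j))
      (fun a b hab => e.injective (Subtype.ext (hv hab))) fun m => ?_
    rw [e.sum_comp (fun i : S => z i * v i ^ (m : ℕ)),
      Finset.sum_coe_sort S (fun i => z i * v i ^ (m : ℕ)), ← h m (m.2.trans_le hz)]
    exact Finset.sum_subset (subset_univ _) fun i _ hi => by simp_all
  funext i
  by_contra hi
  have hiS : i ∈ S := by simpa [hS] using hi
  exact hi (by simpa [e] using congrFun hf (S.equivFin ⟨i, hiS⟩))

/-- The nodes `e^{-2πi n/N}` of the DFT are pairwise distinct. -/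
theorem injective_dft_node {N : ℕ} (hN : 1 ≤ N) :
    Function.Injective fun n : Fin N => (Complex.exp (2 * Real.pi * Complex.I / N))⁻¹ ^ (n : ℕ) :=
  fun a b hab => Fin.ext
    ((Complex.isPrimitiveRoot_exp N (by omega)).inv.pow_inj a.2 b.2 hab)

open Finset in
/-- Multiples `a x` and `b x'` of `K`-sparse vectors coincide if their first `M ≥ 2K` DFT
coefficients do. -/
theorem mul_eq_mul_of_dft_mul_eq_mul {N : ℕ} (hN : 1 ≤ N) {F : Matrix (Fin N) (Fin N) ℂ}
    (hF : ∀ m n : Fin N, F m n =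
      Complex.exp (-2 * (Real.pi : ℂ) * Complex.I * ((m : ℕ) : ℂ) * ((n : ℕ) : ℂ) / (N : ℂ))
        / ((Real.sqrt N : ℝ) : ℂ))
    {K M : ℕ} (hKM : 2 * K ≤ M) (hMN : M ≤ N) {x x' : Fin N → ℂ}
    (hx : #{i | x i ≠ 0} ≤ K) (hx' : #{i | x' i ≠ 0} ≤ K) {a b : ℂ}
    (h : ∀ m : Fin N, (m : ℕ) < M → a * F.mulVec x m = b * F.mulVec x' m) (n : Fin N) :
    a * x n = b * x' n := by
  have hsqrt : ((Real.sqrt N : ℝ) : ℂ) ≠ 0 := by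
    have : (0 : ℝ) < N := by exact_mod_cast hN
    exact_mod_cast (Real.sqrt_pos.2 this).ne'
  have hF' : ∀ m n : Fin N, F m n =
      ((Complex.exp (2 * Real.pi * Complex.I / N))⁻¹ ^ (n : ℕ)) ^ (m : ℕ)
        / ((Real.sqrt N : ℝ) : ℂ) := fun m n => by
    rw [hF, ← pow_mul, ← Complex.exp_neg, ← Complex.exp_nat_mul]
    congr 2
    push_cast
    ring
  have hz : a • x - b • x' = 0 := by
    refine eq_zero_of_forall_lt_sum_mul_pow_eq_zero (injective_dft_node hN) (M := M) ?_
      fun m hm => ?_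
    · refine (card_le_card (t := ({i | x i ≠ 0} : Finset (Fin N)) ∪
        ({i | x' i ≠ 0} : Finset (Fin N))) fun i => ?_).trans
          ((card_union_le _ _).trans (by omega))
      simp only [mem_filter_univ, mem_union]
      contrapose!
      rintro ⟨h₁, h₂⟩
      simp [h₁, h₂]
    · have hm' := sub_eq_zero.2 (h ⟨m, hm.trans_le hMN⟩ hm)
      simp only [Matrix.mulVec, dotProduct, hF', mul_sum, ← sum_sub_distrib] at hm'
      refine (mul_eq_zero.1 ?_).resolve_left (inv_ne_zero hsqrt)
      rw [← hm', mul_sum]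
      refine sum_congr rfl fun i _ => ?_
      simp only [Pi.sub_apply, Pi.smul_apply, smul_eq_mul]
      ring
  simpa [sub_eq_zero] using congrFun hz n


/-- a multi-dimensional `K₁K₂`-sparse signal `x = x₁ ⊗ x₂` on a product of
circulant graphs is determined by the tensor product of the dimensionality-reduced GFT
(DFT) representations `y_i = F^{(i)}_{M_i} x_i` with `M_i ≥ 2K_i`. -/
theorem kronecker_dft_sparse_recovery
    (N1 N2 : ℕ) (hN1 : 1 ≤ N1) (hN2 : 1 ≤ N2)
    (F1 : Matrix (Fin N1) (Fin N1) ℂ) (F2 : Matrix (Fin N2) (Fin N2) ℂ)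
    (hF1 : ∀ m n : Fin N1, F1 m n =
      Complex.exp (-2 * (Real.pi : ℂ) * Complex.I * ((m : ℕ) : ℂ) * ((n : ℕ) : ℂ) / (N1 : ℂ))
        / ((Real.sqrt N1 : ℝ) : ℂ))
    (hF2 : ∀ m n : Fin N2, F2 m n =
      Complex.exp (-2 * (Real.pi : ℂ) * Complex.I * ((m : ℕ) : ℂ) * ((n : ℕ) : ℂ) / (N2 : ℂ))
        / ((Real.sqrt N2 : ℝ) : ℂ))
    (K1 M1 K2 M2 : ℕ) (hKM1 : 2 * K1 ≤ M1) (hMN1 : M1 ≤ N1)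
    (hKM2 : 2 * K2 ≤ M2) (hMN2 : M2 ≤ N2)
    (x1 x1' : Fin N1 → ℂ) (x2 x2' : Fin N2 → ℂ)
    (hx1 : (Finset.univ.filter fun i => x1 i ≠ 0).card ≤ K1)
    (hx1' : (Finset.univ.filter fun i => x1' i ≠ 0).card ≤ K1)
    (hx2 : (Finset.univ.filter fun i => x2 i ≠ 0).card ≤ K2)
    (hx2' : (Finset.univ.filter fun i => x2' i ≠ 0).card ≤ K2)
    (hsamp : ∀ (m1 : Fin N1) (m2 : Fin N2), (m1 : ℕ) < M1 → (m2 : ℕ) < M2 →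
      F1.mulVec x1 m1 * F2.mulVec x2 m2 = F1.mulVec x1' m1 * F2.mulVec x2' m2) :
    ∀ (n1 : Fin N1) (n2 : Fin N2), x1 n1 * x2 n2 = x1' n1 * x2' n2 := by
  intro n1
  refine mul_eq_mul_of_dft_mul_eq_mul hN2 hF2 hKM2 hMN2 hx2 hx2' fun m2 hm2 => ?_
  have h := mul_eq_mul_of_dft_mul_eq_mul hN1 hF1 hKM1 hMN1 hx1 hx1'
    (a := F2.mulVec x2 m2) (b := F2.mulVec x2' m2)
    (fun m1 hm1 => by simpa only [mul_comm] using hsamp m1 m2 hm1 hm2) n1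
  simpa only [mul_comm] using h
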